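/- arXiv:math/0305087 — 3 statements merged into one kernel-verified Lean document; each statement's English description precedes it below -/
import Mathlib

section
/- Let f : ℤ → ℕ ∪ {∞} be a function such that f⁻¹(0) is finite, and let Δ denote the cardinality of f⁻¹(0). Then there exists a sequence U = (u_k)_{k≥1} of integers such that for every integer n, f(n) equals the number (possibly infinite) of indices k ≥ 1 with u_k = n, and such that |u_k| ≤ ⌊(k + Δ)/2⌋ for every k ≥ 1. -/
/-!
List the pairs `(n, i)` with `i < f n`, one for each required copy of `n`, in order of increasing
weight `|n| + i`; since each weight is taken finitely often, this is a sequence, and its first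
coordinates form `U`. When a copy of `n` is listed at the `k`-th place, the copy `(m, 0)` of every
`m` with `|m| < |n|` and `f m ≠ 0` has already been listed, having smaller weight. There are at
least `2|n| - 1 - Δ` such `m`, so `2|n| - 1 - Δ ≤ k - 1`.
-/

open Function Set

section Enumeration

variable {α : Type*}

lemma exists_injective_nat_lt_of_lt {w : α → ℕ} (hw : ∀ n, (w ⁻¹' {n}).Finite) :
    ∃ r : α → ℕ, Injective r ∧ ∀ a b, w a < w b → r a < r b := by
  have : Countable α := Countable.of_preimage_singleton fun n => (hw n).countable
  obtain ⟨g, hg⟩ := exists_injective_nat α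
  -- `r` is the rank in the order by `w`, with ties broken by `g`.
  let key : α → ℕ ×ₗ ℕ := fun a => toLex (w a, g a)
  have key_injective : Injective key := fun a b h =>
    hg (congrArg (fun p => (ofLex p).2) h)
  have finite_key_lt (a : α) : {b | key b < key a}.Finite :=
    ((finite_Iic (w a)).preimage' fun n _ => hw n).subset fun b hb =>
      Prod.Lex.monotone_fst (key b) (key a) (le_of_lt hb)
  have rank_lt {a b : α} (hab : key a < key b) :
      {c | key c < key a}.ncard < {c | key c < key b}.ncard :=
    ncard_lt_ncard ((ssubset_iff_of_subset fun _ hc => lt_trans hc hab).2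
      ⟨a, hab, lt_irrefl (key a)⟩) (finite_key_lt b)
  refine ⟨fun a => {c | key c < key a}.ncard, fun a b hab => ?_, fun a b hab =>
    rank_lt (Prod.Lex.toLex_lt_toLex.2 (.inl hab))⟩
  rcases lt_trichotomy (key a) (key b) with h | h | h
  · exact absurd hab (rank_lt h).ne
  · exact key_injective h
  · exact absurd hab (rank_lt h).ne'

variable [Infinite α]

lemma exists_equiv_strictMono_comp_of_injective {r : α → ℕ} (hr : Injective r) :
    ∃ e : ℕ ≃ α, StrictMono (r ∘ e) := by
  classical
  have : Infinite (range r) := (infinite_range_of_injective hr).to_subtype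
  let s := Nat.Subtype.orderIsoOfNat (range r)
  refine ⟨s.toEquiv.trans (Equiv.ofInjective r hr).symm, fun i j hij => ?_⟩
  simpa [Equiv.apply_ofInjective_symm] using s.strictMono hij

lemma exists_equiv_monotone_comp {w : α → ℕ} (hw : ∀ n, (w ⁻¹' {n}).Finite) :
    ∃ e : ℕ ≃ α, Monotone (w ∘ e) := by
  obtain ⟨r, hr, hwr⟩ := exists_injective_nat_lt_of_lt hw
  obtain ⟨e, he⟩ := exists_equiv_strictMono_comp_of_injective hr
  refine ⟨e, fun i j hij => ?_⟩
  by_contra! h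
  exact (he.monotone hij).not_gt (hwr _ _ h)

end Enumeration

lemma encard_setOf_lt_le {α γ : Type*} [LinearOrder γ] {w : α → γ} {e : ℕ ≃ α}
    (he : Monotone (w ∘ e)) (k : ℕ) : {a | w a < w (e k)}.encard ≤ k := by
  have h : {a | w a < w (e k)} ⊆ e '' Iio k := fun a ha =>
    ⟨e.symm a, he.reflect_lt (by simpa using ha), e.apply_symm_apply a⟩
  calc {a | w a < w (e k)}.encard ≤ (e '' Iio k).encard := encard_le_encard h
    _ = (Iio k).encard := e.injective.encard_image _
    _ = k := by simp [encard_eq_coe_toFinset_card]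

lemma encard_setOf_natCast_lt (a : ℕ∞) : {i : ℕ | (i : ℕ∞) < a}.encard = a := by
  cases a with
  | top => simp
  | coe a => simp [encard_eq_coe_toFinset_card]

/-- The type of labelled copies in the multiset with multiplicity function `f`: the copies of `b`
are the pairs `(b, i)` with `i < f b`. -/
def Copies {β : Type*} (f : β → ℕ∞) : Type _ := {p : β × ℕ // (p.2 : ℕ∞) < f p.1}

namespace Copies

variable {β : Type*} {f : β → ℕ∞}

/-- The element of which `p` is a copy. -/
def val (p : Copies f) : β := p.1.1

/-- The label distinguishing `p` from the other copies of the same element. -/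
def label (p : Copies f) : ℕ := p.1.2

/-- The copy with label `0`. -/
def first (b : support f) : Copies f := ⟨(b, 0), by simpa using pos_iff_ne_zero.2 b.2⟩

lemma encard_val_preimage_singleton (b : β) : (val (f := f) ⁻¹' {b}).encard = f b := by
  have hinj : InjOn (label (f := f)) (val ⁻¹' {b}) := fun p hp q hq h =>
    Subtype.ext (Prod.ext (hp.trans hq.symm) h)
  have himage : label (f := f) '' (val ⁻¹' {b}) = {i : ℕ | (i : ℕ∞) < f b} := by
    ext i
    constructor
    · rintro ⟨p, rfl, rfl⟩
      exact p.2
    · exact fun hi => ⟨⟨(b, i), hi⟩, rfl, rfl⟩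
  rw [← hinj.encard_image, himage, encard_setOf_natCast_lt]

lemma first_injective : Injective (first (f := f)) := fun _ _ h =>
  Subtype.ext (congrArg val h)

lemma finite_preimage_add_label {ν : β → ℕ} (hν : ∀ n, (ν ⁻¹' {n}).Finite) (n : ℕ) :
    ((fun p : Copies f => ν p.val + p.label) ⁻¹' {n}).Finite := by
  have hfin : ((ν ⁻¹' Iic n) ×ˢ Iic n).Finite :=
    ((finite_Iic n).preimage' fun m _ => hν m).prod (finite_Iic n)
  refine (hfin.preimage Subtype.val_injective.injOn).subset fun p hp => ?_
  exact ⟨le_of_add_le_left (le_of_eq hp), le_of_add_le_right (le_of_eq hp)⟩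

end Copies

lemma exists_seq_encard_preimage_eq {β : Type*} {f : β → ℕ∞} (hf : (support f).Infinite)
    {ν : β → ℕ} (hν : ∀ n, (ν ⁻¹' {n}).Finite) :
    ∃ v : ℕ → β, (∀ b, (v ⁻¹' {b}).encard = f b) ∧
      ∀ k, {b ∈ support f | ν b < ν (v k)}.encard ≤ k := by
  have := hf.to_subtype
  have : Infinite (Copies f) := Infinite.of_injective _ Copies.first_injective
  let w : Copies f → ℕ := fun p => ν p.val + p.label
  have hw (n : ℕ) : (w ⁻¹' {n}).Finite := Copies.finite_preimage_add_label hν n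
  obtain ⟨e, he⟩ := exists_equiv_monotone_comp hw
  refine ⟨Copies.val ∘ e, fun b => ?_, fun k => ?_⟩
  · rw [preimage_comp, encard_preimage_of_bijective e.bijective,
      Copies.encard_val_preimage_singleton]
  · have hsub : {b ∈ support f | ν b < ν (e k).val} ⊆ Copies.val '' {p | w p < w (e k)} :=
      fun b ⟨hb, hlt⟩ => ⟨Copies.first ⟨b, hb⟩, Nat.lt_add_right (e k).label hlt, rfl⟩
    calc {b ∈ support f | ν b < ν (e k).val}.encard
        ≤ (Copies.val '' {p | w p < w (e k)}).encard := encard_le_encard hsub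
      _ ≤ {p | w p < w (e k)}.encard := encard_image_le _ _
      _ ≤ k := encard_setOf_lt_le he k

lemma encard_setOf_natAbs_lt (N : ℕ) :
    {m : ℤ | m.natAbs < N}.encard = (2 * N - 1 : ℕ) := by
  have h : {m : ℤ | m.natAbs < N} = (Finset.Ioo (-N : ℤ) N : Set ℤ) := by
    ext m
    simp only [mem_ofPred_eq, Finset.coe_Ioo, mem_Ioo]
    omega
  rw [h, encard_coe_eq_coe_finsetCard, Int.card_Ioo]
  congr 1
  omega

lemma finite_natAbs_preimage_singleton (n : ℕ) : (Int.natAbs ⁻¹' {n}).Finite :=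
  (finite_Icc (-n : ℤ) n).subset fun m (hm : m.natAbs = n) => by
    rw [mem_Icc]
    omega

lemma encard_setOf_one_le_and_pred_eq {β : Type*} (v : ℕ → β) (b : β) :
    {k : ℕ | 1 ≤ k ∧ v (k - 1) = b}.encard = (v ⁻¹' {b}).encard := by
  have h : {k | 1 ≤ k ∧ v (k - 1) = b} = Nat.succ '' (v ⁻¹' {b}) := by
    ext k
    cases k <;> simp
  rw [h, Nat.succ_injective.encard_image]

theorem stmt0 (f : ℤ → ℕ∞) (hf : (f ⁻¹' {0}).Finite) (Δ : ℕ)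
    (hΔ : (f ⁻¹' {0}).ncard = Δ) :
    ∃ u : ℕ → ℤ,
      (∀ n : ℤ, f n = {k : ℕ | 1 ≤ k ∧ u k = n}.encard) ∧
      (∀ k : ℕ, 1 ≤ k → (u k).natAbs ≤ (k + Δ) / 2) := by
  obtain ⟨v, hcount, hbound⟩ :=
    exists_seq_encard_preimage_eq (f := f) hf.infinite_compl finite_natAbs_preimage_singleton
  refine ⟨fun k => v (k - 1), fun n => ?_, fun k hk => ?_⟩
  · rw [encard_setOf_one_le_and_pred_eq, hcount]
  · set N := (v (k - 1)).natAbs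
    have hcover : {m : ℤ | m.natAbs < N} ⊆ {m ∈ support f | m.natAbs < N} ∪ f ⁻¹' {0} :=
      fun m hm => (em (f m = 0)).symm.imp_left fun h => ⟨h, hm⟩
    have hcard : ((2 * N - 1 : ℕ) : ℕ∞) ≤ (k - 1 : ℕ) + Δ := calc
      _ = {m : ℤ | m.natAbs < N}.encard := (encard_setOf_natAbs_lt N).symm
      _ ≤ {m ∈ support f | m.natAbs < N}.encard + (f ⁻¹' {0}).encard :=
        (encard_le_encard hcover).trans (encard_union_le _ _)
      _ ≤ (k - 1 : ℕ) + Δ := add_le_add (hbound (k - 1)) (by rw [← hf.cast_ncard_eq, hΔ])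
    have : 2 * N - 1 ≤ k - 1 + Δ := by exact_mod_cast hcard
    omega
end

section
/- For every nonnegative integer Δ there exist a function f : ℤ → ℕ ∪ {∞} with card(f⁻¹(0)) = Δ and a sequence U = (u_k)_{k≥1} of integers such that for every integer n, f(n) equals the number of indices k ≥ 1 with u_k = n, and |u_k| = ⌊(k + Δ)/2⌋ for all k ≥ 1. (In this sense the bound |u_k| ≤ ⌊(k + Δ)/2⌋ of the enumeration lemma is best possible.) -/
/-!
Start from an enumeration `0, -1, 1, -2, 2, …` of the integers whose term at index `m ≥ 0` has
absolute value `⌊(m + 1) / 2⌋`, and drop its first `Δ` terms. What remains misses exactly those `Δ`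
integers, and its `k`-th term (counted from `1`) sits at index `m = k - 1 + Δ`, so it has absolute
value `⌊(k + Δ) / 2⌋`.
-/

section Occurrences

variable {α : Type*}

/-- The multiplicity with which `a` occurs in the sequence `u 1, u 2, …`. The value `u 0` is
ignored because sequences are indexed from `1`. -/
noncomputable def occurrenceCount (u : ℕ → α) (a : α) : ℕ∞ :=
  {k : ℕ | 1 ≤ k ∧ u k = a}.encard

theorem occurrenceCount_preimage_zero (u : ℕ → α) :
    occurrenceCount u ⁻¹' {0} = (u '' Set.Ici 1)ᶜ := by
  ext a
  simp [occurrenceCount, Set.eq_empty_iff_forall_notMem]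

/-- The sequence, indexed from `1`, that is left of `g 0, g 1, …` after its first `d` terms are
dropped. The term at the unused index `0` is `g d`, by truncated subtraction. -/
def dropTerms (g : ℕ → α) (d k : ℕ) : α :=
  g (k - 1 + d)

theorem dropTerms_image_Ici_one (g : ℕ → α) (d : ℕ) :
    dropTerms g d '' Set.Ici 1 = g '' Set.Ici d := by
  have shift : (fun k ↦ k - 1 + d) '' Set.Ici 1 = Set.Ici d := by
    ext m
    simp only [Set.mem_image, Set.mem_Ici]
    exact ⟨by omega, fun h ↦ ⟨m - d + 1, by omega, by omega⟩⟩
  rw [← shift, Set.image_image]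
  rfl

theorem occurrenceCount_dropTerms_preimage_zero {g : ℕ → α} (hg : g.Bijective) (d : ℕ) :
    occurrenceCount (dropTerms g d) ⁻¹' {0} = g '' Set.Iio d := by
  rw [occurrenceCount_preimage_zero, dropTerms_image_Ici_one, ← Set.image_compl_eq hg,
    Set.compl_Ici]

end Occurrences

theorem intEquivNat_natCast (n : ℕ) : Equiv.intEquivNat n = 2 * n := rfl

theorem intEquivNat_negSucc (n : ℕ) : Equiv.intEquivNat (Int.negSucc n) = 2 * n + 1 := rfl

theorem natAbs_eq_intEquivNat_add_one_div_two (z : ℤ) :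
    z.natAbs = (Equiv.intEquivNat z + 1) / 2 := by
  cases z with
  | ofNat n =>
    rw [Int.ofNat_eq_natCast, intEquivNat_natCast, Int.natAbs_natCast]
    omega
  | negSucc n =>
    rw [intEquivNat_negSucc, Int.natAbs_negSucc]
    omega

theorem natAbs_intEquivNat_symm (m : ℕ) :
    (Equiv.intEquivNat.symm m).natAbs = (m + 1) / 2 := by
  rw [natAbs_eq_intEquivNat_add_one_div_two, Equiv.apply_symm_apply]

theorem stmt1 (Δ : ℕ) :
    ∃ (f : ℤ → ℕ∞) (u : ℕ → ℤ),
      (f ⁻¹' {0}).Finite ∧ (f ⁻¹' {0}).ncard = Δ ∧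
      (∀ n : ℤ, f n = {k : ℕ | 1 ≤ k ∧ u k = n}.encard) ∧
      (∀ k : ℕ, 1 ≤ k → (u k).natAbs = (k + Δ) / 2) := by
  let e : ℕ ≃ ℤ := Equiv.intEquivNat.symm
  have zeros : occurrenceCount (dropTerms e Δ) ⁻¹' {0} = e '' Set.Iio Δ :=
    occurrenceCount_dropTerms_preimage_zero e.bijective Δ
  refine ⟨occurrenceCount (dropTerms e Δ), dropTerms e Δ, ?_, ?_, fun _ ↦ rfl, fun k hk ↦ ?_⟩
  · rw [zeros]
    exact (Set.finite_Iio Δ).image e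
  · rw [zeros, Set.ncard_image_of_injective _ e.injective, ← Finset.coe_Iio,
      Set.ncard_coe_finset, Nat.card_Iio]
  · calc (e (k - 1 + Δ)).natAbs = (k - 1 + Δ + 1) / 2 := natAbs_intEquivNat_symm _
      _ = (k + Δ) / 2 := by rw [show k - 1 + Δ + 1 = k + Δ by omega]
end

section
/- Let f : ℤ → ℕ ∪ {∞} be any function such that Δ = card(f⁻¹(0)) is finite, and let c = 8 + ⌊(Δ + 1)/2⌋. Then there exists a set A of integers such that r_{A,2}(n) = f(n) for all integers n, and such that the number of elements a ∈ A with |a| ≤ x is at least (x/c)^{1/3} for all real x ≥ 8c. -/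
/-- The representation function of order 2: the number (in `ℕ∞`) of ways to
write `n = a₁ + a₂` with `a₁, a₂ ∈ A` and `a₁ ≤ a₂`. -/
noncomputable def rep2 (A : Set ℤ) (n : ℤ) : ℕ∞ :=
  {p : ℤ × ℤ | p.1 ∈ A ∧ p.2 ∈ A ∧ p.1 ≤ p.2 ∧ p.1 + p.2 = n}.encard

/-!
The set is built greedily as an increasing union of finite sets `A` with `rep2 A ≤ f`. To represent
a deficient integer `u` once more, adjoin a pair `a, u - a` for which every other new sum is a
nonzero of `f` not represented so far, and so may be represented once. Each coincidence to be
avoided is a linear equation in `a` with nonzero leading coefficient. If `#A = s` and `f` has `Δ`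
zeros, there are about `2 s (s² + Δ)` such equations, so some `a` with `|a| ≲ s (s² + Δ)` is
admissible. Hence every `A` in the construction lies in `[-s (s² + Δ), s (s² + Δ)]`. Given
`x = c y³` with `y ≥ 2`, taking `s` even with `y ≤ s ≤ y + 2 ≤ 2 y` gives
`s (s² + Δ) ≤ 8 y³ + 2 Δ y ≤ (8 + Δ / 2) y³ ≤ x`.
-/

open Filter Finset
open scoped Pointwise

theorem encard_iUnion_of_directed {α ι : Type*} [Nonempty ι] {s : ι → Set α}
    (hs : Directed (· ⊆ ·) s) : (⋃ i, s i).encard = ⨆ i, (s i).encard := by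
  refine le_antisymm (ENat.forall_natCast_le_iff_le.1 fun m hm ↦ ?_)
    (iSup_le fun i ↦ Set.encard_le_encard (Set.subset_iUnion s i))
  obtain ⟨t, ht, htm⟩ := Set.exists_subset_encard_eq hm
  lift t to Finset α using Set.finite_of_encard_eq_coe htm
  obtain ⟨i, hi⟩ := hs.exists_mem_subset_of_finset_subset_biUnion ht
  exact htm ▸ (Set.encard_le_encard hi).trans (le_iSup (fun i ↦ (s i).encard) i)

theorem le_iSup_of_frequently_lt_succ {r : ℕ → ℕ∞} {b : ℕ∞} (hr : Monotone r)
    (h : ∃ᶠ k in atTop, r k < b → r k < r (k + 1)) : b ≤ ⨆ k, r k := by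
  by_contra! hlt
  obtain ⟨i, hi⟩ := ENat.exists_eq_iSup_of_lt_top hlt.lt_top
  obtain ⟨k, hik, hk⟩ := frequently_atTop.1 h i
  have hk_lt : r k < r (k + 1) := hk ((le_iSup r k).trans_lt hlt)
  exact (hk_lt.trans_le (le_iSup r (k + 1))).not_ge (hi ▸ hr hik)

theorem exists_seq_frequently_eq (α : Type*) [Countable α] [Nonempty α] :
    ∃ g : ℕ → α, ∀ x, ∃ᶠ k in atTop, g k = x := by
  obtain ⟨e, he⟩ := exists_surjective_nat α
  refine ⟨fun k ↦ e k.unpair.2, fun x ↦ frequently_atTop.2 fun N ↦ ?_⟩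
  obtain ⟨i, rfl⟩ := he x
  exact ⟨N.pair i, N.left_le_pair i, by simp⟩

theorem finite_setOf_mem_abs_le (A : Set ℤ) (x : ℝ) :
    {a : ℤ | a ∈ A ∧ |(a : ℝ)| ≤ x}.Finite :=
  (isCompact_closedBall (0 : ℤ) x).finite_of_discrete.subset fun a ha ↦ by
    simpa [Int.norm_eq_abs] using ha.2

theorem exists_abs_le_notMem {s : Finset ℤ} {N : ℕ} (hs : #s < 2 * N + 1) :
    ∃ a : ℤ, |a| ≤ N ∧ a ∉ s := by
  have hcard : #(Icc (-N : ℤ) N) = 2 * N + 1 := by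
    rw [Int.card_Icc]
    omega
  obtain ⟨a, ha, has⟩ := exists_mem_notMem_of_card_lt_card (hcard ▸ hs)
  exact ⟨a, abs_le.2 (mem_Icc.1 ha), has⟩

theorem exists_abs_le_forall_mul_add_ne_zero {E : Finset (ℤ × ℤ)} {N : ℕ}
    (hE : ∀ e ∈ E, e.1 ≠ 0) (hcard : #E < 2 * N + 1) :
    ∃ a : ℤ, |a| ≤ N ∧ ∀ e ∈ E, e.1 * a + e.2 ≠ 0 := by
  let roots := E.image fun e ↦ -e.2 / e.1
  obtain ⟨a, ha, ha_roots⟩ := exists_abs_le_notMem (s := roots) (card_image_le.trans_lt hcard)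
  refine ⟨a, ha, fun e he hroot ↦ ha_roots (mem_image.2 ⟨e, he, ?_⟩)⟩
  exact Int.ediv_eq_of_eq_mul_right (hE e he) (by linarith)

/-- The representations of `n` counted by `rep2 A n`. -/
def repPairs (A : Set ℤ) (n : ℤ) : Set (ℤ × ℤ) :=
  {p | p.1 ∈ A ∧ p.2 ∈ A ∧ p.1 ≤ p.2 ∧ p.1 + p.2 = n}

theorem repPairs_mono {A B : Set ℤ} (h : A ⊆ B) (n : ℤ) : repPairs A n ⊆ repPairs B n :=
  fun _ ⟨h₁, h₂, hp⟩ ↦ ⟨h h₁, h h₂, hp⟩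

theorem repPairs_insert_of_notMem {A : Set ℤ} {a n : ℤ} (h : n - a ∉ insert a A) :
    repPairs (insert a A) n = repPairs A n := by
  refine Set.Subset.antisymm ?_ (repPairs_mono (Set.subset_insert a A) n)
  rintro ⟨x, y⟩ ⟨hx, hy, hxy, rfl⟩
  have hxa : x ≠ a := by
    rintro rfl
    exact h (by simpa using hy)
  have hya : y ≠ a := by
    rintro rfl
    exact h (by simpa using hx)
  exact ⟨hx.resolve_left hxa, hy.resolve_left hya, hxy, rfl⟩

theorem repPairs_insert_of_mem {A : Set ℤ} {a n : ℤ} (h : n - a ∈ insert a A) :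
    repPairs (insert a A) n = insert (min a (n - a), max a (n - a)) (repPairs A n) := by
  ext ⟨x, y⟩
  simp only [repPairs, Set.mem_insert_iff, Set.mem_ofPred_eq, Prod.mk.injEq] at h ⊢
  grind

theorem repPairs_iUnion_of_directed {ι : Type*} {S : ι → Set ℤ} (hS : Directed (· ⊆ ·) S) (n : ℤ) :
    repPairs (⋃ i, S i) n = ⋃ i, repPairs (S i) n := by
  refine Set.Subset.antisymm ?_
    (Set.iUnion_subset fun i ↦ repPairs_mono (Set.subset_iUnion S i) n)
  rintro p ⟨h₁, h₂, hp⟩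
  obtain ⟨i, hi⟩ := Set.mem_iUnion.1 h₁
  obtain ⟨j, hj⟩ := Set.mem_iUnion.1 h₂
  obtain ⟨k, hik, hjk⟩ := hS i j
  exact Set.mem_iUnion.2 ⟨k, hik hi, hjk hj, hp⟩

theorem rep2_mono {A B : Set ℤ} (h : A ⊆ B) (n : ℤ) : rep2 A n ≤ rep2 B n :=
  Set.encard_le_encard (repPairs_mono h n)

theorem rep2_eq_zero_of_notMem_add {A : Set ℤ} {n : ℤ} (h : n ∉ A + A) : rep2 A n = 0 :=
  Set.encard_eq_zero.2 <| Set.eq_empty_iff_forall_notMem.2 fun _ ⟨h₁, h₂, _, hp⟩ ↦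
    h ⟨_, h₁, _, h₂, hp⟩

theorem rep2_insert_of_notMem {A : Set ℤ} {a n : ℤ} (h : n - a ∉ insert a A) :
    rep2 (insert a A) n = rep2 A n :=
  congrArg Set.encard (repPairs_insert_of_notMem h)

theorem rep2_insert_of_mem {A : Set ℤ} {a n : ℤ} (ha : a ∉ A) (h : n - a ∈ insert a A) :
    rep2 (insert a A) n = rep2 A n + 1 := by
  have hnew : (min a (n - a), max a (n - a)) ∉ repPairs A n := by
    rintro ⟨hmin, hmax, -⟩
    grind
  exact (congrArg Set.encard (repPairs_insert_of_mem h)).trans (Set.encard_insert_of_notMem hnew)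

theorem rep2_iUnion_of_directed {ι : Type*} [Nonempty ι] {S : ι → Set ℤ}
    (hS : Directed (· ⊆ ·) S) (n : ℤ) : rep2 (⋃ i, S i) n = ⨆ i, rep2 (S i) n :=
  (congrArg Set.encard (repPairs_iUnion_of_directed hS n)).trans <|
    encard_iUnion_of_directed fun i j ↦
      let ⟨k, hik, hjk⟩ := hS i j
      ⟨k, repPairs_mono hik n, repPairs_mono hjk n⟩

theorem rep2_insert_le {f : ℤ → ℕ∞} {A : Set ℤ} {a : ℤ} (haA : a ∉ A) (hA : rep2 A ≤ f)
    (ha : ∀ y ∈ insert a A, rep2 A (a + y) < f (a + y)) : rep2 (insert a A) ≤ f := by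
  intro n
  by_cases hn : n - a ∈ insert a A
  · rw [rep2_insert_of_mem haA hn]
    simpa using Order.add_one_le_of_lt (ha _ hn)
  · exact (rep2_insert_of_notMem hn).trans_le (hA n)

theorem rep2_lt_of_notMem_add {f : ℤ → ℕ∞} {A : Set ℤ} {n : ℤ} (hn : n ∉ A + A) (hf : f n ≠ 0) :
    rep2 A n < f n :=
  rep2_eq_zero_of_notMem_add hn ▸ pos_iff_ne_zero.2 hf

/-- The sums of a new element with itself and with the elements of `A`, as affine forms `M X + T`
encoded by pairs `(M, T)`, when the new element is itself the affine form `m X + t`. -/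
def newSumForms (A : Finset ℤ) (m t : ℤ) : Finset (ℤ × ℤ) :=
  insert (2 * m, 2 * t) (A.image fun y ↦ (m, t + y))

theorem card_newSumForms_le (A : Finset ℤ) (m t : ℤ) : #(newSumForms A m t) ≤ #A + 1 :=
  (card_insert_le _ _).trans (Nat.succ_le_succ card_image_le)

theorem fst_of_mem_newSumForms {A : Finset ℤ} {m t : ℤ} {e : ℤ × ℤ} (he : e ∈ newSumForms A m t) :
    e.1 = m ∨ e.1 = 2 * m := by
  simp only [newSumForms, mem_insert, mem_image] at he
  grind

theorem exists_mem_newSumForms_eval_eq {A : Finset ℤ} {m t a b y : ℤ} (hb : m * a + t = b)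
    (hy : y ∈ insert b A) : ∃ e ∈ newSumForms A m t, e.1 * a + e.2 = b + y := by
  simp only [newSumForms, mem_insert, mem_image] at hy ⊢
  rcases hy with rfl | hy
  · exact ⟨_, Or.inl rfl, by linarith⟩
  · exact ⟨_, Or.inr ⟨y, hy, rfl⟩, by linarith⟩

/-- The affine forms `M X + T`, encoded by pairs `(M, T)`, that must not vanish at `a` if adjoining
`a` to `A` is to produce only sums outside `W`, and adjoining `u - a` afterwards only sums outside
`W` that differ from those produced by `a`, apart from `a + (u - a)`. -/
def collisionForms (A W : Finset ℤ) (u : ℤ) : Finset (ℤ × ℤ) :=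
  (newSumForms A 1 0 - {0} ×ˢ W) ∪ (newSumForms A (-1) u - ({0} ×ˢ W ∪ newSumForms A 1 0))

theorem card_collisionForms_le (A W : Finset ℤ) (u : ℤ) :
    #(collisionForms A W u) ≤ 2 * (#A + 1) * #W + (#A + 1) ^ 2 := by
  unfold collisionForms
  grw [card_union_le, card_sub_le, card_sub_le, card_union_le, card_newSumForms_le,
    card_newSumForms_le, card_product, card_singleton]
  exact le_of_eq (by ring)

theorem fst_ne_zero_of_mem_collisionForms {A W : Finset ℤ} {u : ℤ} {e : ℤ × ℤ}
    (he : e ∈ collisionForms A W u) : e.1 ≠ 0 := by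
  simp only [collisionForms, mem_union, Finset.mem_sub, mem_product, mem_singleton] at he
  rcases he with ⟨p, hp, q, ⟨hq, -⟩, rfl⟩ | ⟨p, hp, q, ⟨hq, -⟩ | hq, rfl⟩
  · have := fst_of_mem_newSumForms hp
    rw [Prod.fst_sub]
    omega
  · have := fst_of_mem_newSumForms hp
    rw [Prod.fst_sub]
    omega
  · have := fst_of_mem_newSumForms hp
    have := fst_of_mem_newSumForms hq
    rw [Prod.fst_sub]
    omega

theorem exists_pair_avoiding (A W : Finset ℤ) (u : ℤ) {N : ℕ}
    (hN : 2 * (#A + 1) * #W + (#A + 1) ^ 2 < 2 * N + 1) :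
    ∃ a v : ℤ, a + v = u ∧ |a| ≤ N ∧ (∀ y ∈ insert a A, a + y ∉ W) ∧
      ∀ y ∈ insert v A, v + y ∉ W ∧ ∀ z ∈ insert a A, v + y ≠ a + z := by
  obtain ⟨a, ha, hform⟩ := exists_abs_le_forall_mul_add_ne_zero
    (fun _ ↦ fst_ne_zero_of_mem_collisionForms) ((card_collisionForms_le A W u).trans_lt hN)
  have ne_of_first {p q : ℤ × ℤ} (hp : p ∈ newSumForms A 1 0) (hq : q ∈ {0} ×ˢ W) :
      p.1 * a + p.2 ≠ q.1 * a + q.2 := fun h ↦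
    hform (p - q) (mem_union_left _ (sub_mem_sub hp hq)) (by
      rw [Prod.fst_sub, Prod.snd_sub]
      linarith)
  have ne_of_second {p q : ℤ × ℤ} (hp : p ∈ newSumForms A (-1) u)
      (hq : q ∈ {0} ×ˢ W ∪ newSumForms A 1 0) : p.1 * a + p.2 ≠ q.1 * a + q.2 := fun h ↦
    hform (p - q) (mem_union_right _ (sub_mem_sub hp hq)) (by
      rw [Prod.fst_sub, Prod.snd_sub]
      linarith)
  have mem_const {w : ℤ} (hw : w ∈ W) : (0, w) ∈ ({0} ×ˢ W : Finset (ℤ × ℤ)) := by simpa using hw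
  have exists_first {y : ℤ} (hy : y ∈ insert a A) :=
    exists_mem_newSumForms_eval_eq (show 1 * a + 0 = a by ring) hy
  have exists_second {y : ℤ} (hy : y ∈ insert (u - a) A) :=
    exists_mem_newSumForms_eval_eq (show -1 * a + u = u - a by ring) hy
  refine ⟨a, u - a, by ring, ha, fun y hy hw ↦ ?_, fun y hy ↦ ⟨fun hw ↦ ?_, fun z hz h ↦ ?_⟩⟩
  · obtain ⟨p, hp, hpy⟩ := exists_first hy
    exact ne_of_first hp (mem_const hw) (by simpa using hpy)
  · obtain ⟨p, hp, hpy⟩ := exists_second hy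
    exact ne_of_second hp (mem_union_left _ (mem_const hw)) (by simpa using hpy)
  · obtain ⟨p, hp, hpy⟩ := exists_second hy
    obtain ⟨q, hq, hqz⟩ := exists_first hz
    exact ne_of_second hp (mem_union_right _ hq) (by rw [hpy, hqz, h])

theorem rep2_insert_insert_le {f : ℤ → ℕ∞} {A : Set ℤ} {a v : ℤ} (haA : a ∉ A)
    (hvA : v ∉ insert a A) (hA : rep2 A ≤ f) (hav : rep2 A (a + v) < f (a + v))
    (ha : ∀ y ∈ insert a A, a + y ∉ A + A ∧ f (a + y) ≠ 0)
    (hv : ∀ y ∈ insert v A, v + y ∉ A + A ∧ f (v + y) ≠ 0 ∧ ∀ z ∈ insert a A, v + y ≠ a + z) :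
    rep2 (insert v (insert a A)) ≤ f ∧
      rep2 (insert v (insert a A)) (a + v) = rep2 A (a + v) + 1 := by
  have hle : rep2 (insert a A) ≤ f :=
    rep2_insert_le haA hA fun y hy ↦ rep2_lt_of_notMem_add (ha y hy).1 (ha y hy).2
  have heq : rep2 (insert a A) (a + v) = rep2 A (a + v) :=
    rep2_insert_of_notMem (by simpa using hvA)
  refine ⟨rep2_insert_le hvA hle fun y hy ↦ ?_, ?_⟩
  · obtain rfl | hya := eq_or_ne y a
    · rwa [add_comm v, heq]
    · obtain ⟨hsum, hf, hne⟩ := hv y (by grind)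
      refine rep2_lt_of_notMem_add ?_ hf
      rintro ⟨x, hx, z, hz, hxz⟩
      rcases hx with rfl | hx
      · exact hne z hz hxz.symm
      · rcases hz with rfl | hz
        · exact hne x (.inr hx) (by rw [← hxz, add_comm])
        · exact hsum ⟨x, hx, z, hz, hxz⟩
  · rw [rep2_insert_of_mem hvA (by simp), heq]

theorem card_union_add_self_le (A Z : Finset ℤ) : #(Z ∪ (A + A)) ≤ #A ^ 2 + #Z := by
  grw [card_union_le, card_add_le, sq, add_comm]

theorem exists_rep2_pair_extension {f : ℤ → ℕ∞} {A Z : Finset ℤ} {u : ℤ}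
    (hZ : ∀ n, f n = 0 → n ∈ Z) (hA : rep2 A ≤ f) (hu : rep2 A u < f u) :
    ∃ B : Finset ℤ, A ⊆ B ∧ #B = #A + 2 ∧ rep2 B ≤ f ∧ rep2 B u = rep2 A u + 1 ∧
      ∀ b ∈ B, b ∈ A ∨ |b| ≤ (#A + 1) * (#A ^ 2 + #Z + #A + 1) + |u| := by
  obtain ⟨a, v, rfl, ha_abs, ha, hv⟩ := exists_pair_avoiding A (Z ∪ (A + A)) u
    (N := (#A + 1) * (#A ^ 2 + #Z + #A + 1)) (by
      grw [card_union_add_self_le]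
      linarith [sq_nonneg (#A + 1)])
  have avoids {n : ℤ} (hn : n ∉ Z ∪ (A + A)) : n ∉ (A + A : Set ℤ) ∧ f n ≠ 0 := by
    rw [mem_union, not_or] at hn
    exact ⟨by exact_mod_cast hn.2, fun h ↦ hn.1 (hZ n h)⟩
  have haA : a ∉ A := fun h ↦ ha a (mem_insert_self a A) (mem_union_right _ (add_mem_add h h))
  have hvA : v ∉ insert a A := by
    obtain ⟨hvv, hne⟩ := hv v (mem_insert_self v A)
    exact fun h ↦ (mem_insert.1 h).elim (fun hva ↦ hne v h (by rw [hva]))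
      fun h ↦ hvv (mem_union_right _ (add_mem_add h h))
  have hB := rep2_insert_insert_le (A := A) (by simpa using haA) (by simpa using hvA) hA hu
    (fun y hy ↦ avoids (ha y (by simpa using hy)))
    (fun y hy ↦
      let ⟨hvy, hne⟩ := hv y (by simpa using hy)
      ⟨(avoids hvy).1, (avoids hvy).2, fun z hz ↦ hne z (by simpa using hz)⟩)
  rw [← coe_insert, ← coe_insert] at hB
  refine ⟨insert v (insert a A), (subset_insert a A).trans (subset_insert v _), ?_, hB.1, hB.2, ?_⟩
  · rw [card_insert_of_notMem hvA, card_insert_of_notMem haA]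
  · have ha_abs' : |a| ≤ (#A + 1) * (#A ^ 2 + #Z + #A + 1) := by exact_mod_cast ha_abs
    intro b hb
    obtain rfl | rfl | hbA : b = v ∨ b = a ∨ b ∈ A := by simpa using hb
    · right
      grind
    · right
      linarith [abs_nonneg (b + v)]
    · exact .inl hbA

theorem exists_rep2_lt {f : ℤ → ℕ∞} {A Z : Finset ℤ} (hZ : ∀ n, f n = 0 → n ∈ Z) (t : ℤ) :
    ∃ u : ℤ, |u| ≤ #A ^ 2 + #Z + #A ∧ rep2 A u < f u ∧ (|t| ≤ #A → rep2 A t < f t → u = t) := by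
  by_cases ht : |t| ≤ #A ∧ rep2 A t < f t
  · exact ⟨t, ht.1.trans (by nlinarith), ht.2, fun _ _ ↦ rfl⟩
  · obtain ⟨u, hu, hu_notMem⟩ := exists_abs_le_notMem (s := Z ∪ (A + A)) (N := #A ^ 2 + #Z + #A)
      (by grw [card_union_add_self_le]; omega)
    rw [mem_union, not_or] at hu_notMem
    exact ⟨u, by exact_mod_cast hu, rep2_lt_of_notMem_add (by exact_mod_cast hu_notMem.2)
      fun h ↦ hu_notMem.1 (hZ u h), fun h₁ h₂ ↦ (ht ⟨h₁, h₂⟩).elim⟩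

/-- The finite sets from which the construction is assembled: `A` represents no integer too often,
and its elements are at most cubic in its cardinality. The parameter `d` stands for the number of
zeros of `f`. -/
structure IsApproximant (f : ℤ → ℕ∞) (d : ℕ) (A : Finset ℤ) : Prop where
  rep2_le : rep2 A ≤ f
  abs_le : ∀ a ∈ A, |a| ≤ #A * (#A ^ 2 + d)

namespace IsApproximant

theorem empty (f : ℤ → ℕ∞) (d : ℕ) : IsApproximant f d ∅ where
  rep2_le n := by simp [rep2_eq_zero_of_notMem_add]
  abs_le := by simp

theorem exists_extension {f : ℤ → ℕ∞} {A Z : Finset ℤ} (hA : IsApproximant f #Z A)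
    (hZ : ∀ n, f n = 0 → n ∈ Z) (t : ℤ) :
    ∃ B, IsApproximant f #Z B ∧ A ⊆ B ∧ #B = #A + 2 ∧
      (|t| ≤ #A → rep2 A t < f t → rep2 A t < rep2 B t) := by
  obtain ⟨u, hu_abs, hu, hut⟩ := exists_rep2_lt hZ t
  obtain ⟨B, hAB, hcard, hle, hBu, hB_abs⟩ := exists_rep2_pair_extension hZ hA.rep2_le hu
  refine ⟨B, ⟨hle, fun b hb ↦ ?_⟩, hAB, hcard, fun ht hlt ↦ ?_⟩
  · rw [hcard]
    push_cast
    rcases hB_abs b hb with hbA | hb_new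
    · refine (hA.abs_le b hbA).trans ?_
      gcongr <;> simp
    · refine hb_new.trans ((add_le_add_right hu_abs _).trans ?_)
      linarith [sq_nonneg (#A + 1)]
  · rw [← hut ht hlt, hBu]
    exact ENat.lt_add_one_iff (ne_top_of_lt hu) |>.2 le_rfl

theorem exists_chain {f : ℤ → ℕ∞} {Z : Finset ℤ} (hZ : ∀ n, f n = 0 → n ∈ Z) :
    ∃ S : ℕ → Finset ℤ, Monotone S ∧ (∀ k, IsApproximant f #Z (S k)) ∧ (∀ k, #(S k) = 2 * k) ∧
      ∀ n, ∃ᶠ k in atTop, rep2 (S k) n < f n → rep2 (S k) n < rep2 (S (k + 1)) n := by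
  obtain ⟨g, hg⟩ := exists_seq_frequently_eq ℤ
  choose next hnext hsub hcard hprogress using
    fun (t : ℤ) (A : {A // IsApproximant f #Z A}) ↦ A.2.exists_extension hZ t
  let S (k : ℕ) : {A // IsApproximant f #Z A} :=
    k.rec ⟨∅, empty f #Z⟩ fun k A ↦ ⟨next (g k) A, hnext (g k) A⟩
  have hS_card (k : ℕ) : #(S k).1 = 2 * k := by
    induction k with
    | zero => rfl
    | succ k ih => rw [mul_add, ← ih]; exact hcard (g k) (S k)
  refine ⟨fun k ↦ (S k).1, monotone_nat_of_le_succ fun k ↦ hsub (g k) (S k), fun k ↦ (S k).2,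
    hS_card, fun n ↦ ?_⟩
  refine ((hg n).and_eventually (eventually_ge_atTop n.natAbs)).mono ?_
  rintro k ⟨rfl, hk⟩
  exact hprogress (g k) (S k) (by rw [hS_card, Int.abs_eq_natAbs]; lia)

end IsApproximant

theorem mul_sq_add_le_mul_cube {c d s y : ℝ} (hc : 8 + d / 2 ≤ c) (hd : 0 ≤ d) (hs : 0 ≤ s)
    (hy : 2 ≤ y) (hsy : s ≤ 2 * y) : s * (s ^ 2 + d) ≤ c * y ^ 3 :=
  calc s * (s ^ 2 + d) ≤ 2 * y * ((2 * y) ^ 2 + d) := by gcongr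
    _ ≤ (8 + d / 2) * y ^ 3 := by
      have : 0 ≤ d * y * (y ^ 2 - 2 ^ 2) := by
        have : (2 : ℝ) ^ 2 ≤ y ^ 2 := by gcongr
        have := sub_nonneg.2 this
        positivity
      linarith
    _ ≤ c * y ^ 3 := by gcongr

theorem rpow_one_third_le_ncard {A : Set ℤ} {c d x : ℝ} (hc : 8 + d / 2 ≤ c) (hd : 0 ≤ d)
    (hx : 8 * c ≤ x) (hA : ∀ k : ℕ, ∃ B : Finset ℤ, ↑B ⊆ A ∧ #B = 2 * k ∧
      ∀ b ∈ B, |(b : ℝ)| ≤ #B * (#B ^ 2 + d)) :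
    (x / c) ^ ((1 : ℝ) / 3) ≤ ({a : ℤ | a ∈ A ∧ |(a : ℝ)| ≤ x}.ncard : ℝ) := by
  have hc_pos : 0 < c := by linarith
  have hxc : 2 ^ 3 ≤ x / c := by
    rw [le_div_iff₀ hc_pos]
    linarith
  set y := (x / c) ^ ((1 : ℝ) / 3)
  have hy_cube : c * y ^ 3 = x := by
    have : y ^ 3 = x / c := by
      simpa [y] using Real.rpow_inv_natCast_pow (n := 3) (by linarith) three_ne_zero
    rw [this, mul_div_cancel₀ x hc_pos.ne']
  have hy : 2 ≤ y := by
    rw [show y = (x / c) ^ (3 : ℝ)⁻¹ by simp [y],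
      Real.le_rpow_inv_iff_of_pos zero_le_two (by linarith) three_pos]
    exact_mod_cast hxc
  obtain ⟨B, hBA, hB_card, hB_abs⟩ := hA ⌈y / 2⌉₊
  have hyB : y ≤ #B := by
    rw [hB_card]
    push_cast
    linarith [Nat.le_ceil (y / 2)]
  have hBy : #B ≤ 2 * y := by
    rw [hB_card]
    push_cast
    linarith [Nat.ceil_lt_add_one (show 0 ≤ y / 2 by linarith)]
  have hB_sub : ↑B ⊆ {a : ℤ | a ∈ A ∧ |(a : ℝ)| ≤ x} := fun b hb ↦ ⟨hBA hb,
    (hB_abs b hb).trans (hy_cube ▸ mul_sq_add_le_mul_cube hc hd (by positivity) hy hBy)⟩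
  have hB_le := Set.ncard_le_ncard hB_sub (finite_setOf_mem_abs_le A x)
  rw [Set.ncard_coe_finset] at hB_le
  exact hyB.trans (by exact_mod_cast hB_le)

theorem stmt2 (f : ℤ → ℕ∞) (hf : (f ⁻¹' {0}).Finite) (Δ : ℕ)
    (hΔ : (f ⁻¹' {0}).ncard = Δ) (c : ℕ) (hc : c = 8 + (Δ + 1) / 2) :
    ∃ A : Set ℤ,
      (∀ n : ℤ, rep2 A n = f n) ∧
      ∀ x : ℝ, 8 * (c : ℝ) ≤ x →
        (x / (c : ℝ)) ^ ((1 : ℝ) / 3) ≤ ({a : ℤ | a ∈ A ∧ |(a : ℝ)| ≤ x}.ncard : ℝ) := by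
  have hcard : #hf.toFinset = Δ := by rw [← hΔ, Set.ncard_eq_toFinset_card _ hf]
  obtain ⟨S, hS_mono, hS, hS_card, hS_progress⟩ :=
    IsApproximant.exists_chain (f := f) (Z := hf.toFinset) (by simp)
  have hS_mono' : Monotone fun k ↦ (S k : Set ℤ) := fun _ _ h ↦ coe_subset.2 (hS_mono h)
  refine ⟨⋃ k, S k, fun n ↦ ?_, fun x hx ↦ ?_⟩
  · rw [rep2_iUnion_of_directed hS_mono'.directed_le]
    exact le_antisymm (iSup_le fun k ↦ (hS k).rep2_le n)
      (le_iSup_of_frequently_lt_succ (fun _ _ h ↦ rep2_mono (hS_mono' h) n) (hS_progress n))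
  · have hc' : 8 + (Δ : ℝ) / 2 ≤ c := by
      have : 16 + Δ ≤ 2 * c := by omega
      have : (16 + Δ : ℝ) ≤ 2 * c := by exact_mod_cast this
      linarith
    refine rpow_one_third_le_ncard hc' Δ.cast_nonneg hx fun k ↦
      ⟨S k, Set.subset_iUnion (fun k ↦ (S k : Set ℤ)) k, hS_card k, fun a ha ↦ ?_⟩
    exact_mod_cast hcard ▸ (hS k).abs_le a ha
end
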